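/- arXiv:math/0606007 — 2 statements merged into one kernel-verified Lean document; each statement's English description precedes it below -/
import Mathlib

section
/- Let γ : [0,1] → ℝ^m × ℝ^n = ℝ^{m+n} be a continuous rectifiable curve of length L, and let a and b be the lengths of its coordinate projections γ₁ : [0,1] → ℝ^m and γ₂ : [0,1] → ℝ^n (so γ(t) = (γ₁(t), γ₂(t))). Then a² + b² ≤ L². -/
open Set Filter MeasureTheory
open scoped ENNReal NNReal RealInnerProductSpace

noncomputable section

/-- The parameters `u 0 < u 1 < ⋯ < u m` of a polygon inscribed in (the restriction to
`[a,b]` of) a curve: strictly increasing parameters lying in `[a,b]`. -/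
def InscribedIn (a b : ℝ) (m : ℕ) (u : ℕ → ℝ) : Prop :=
  (∀ i < m, u i < u (i + 1)) ∧ ∀ i ≤ m, u i ∈ Set.Icc a b

/-- The length of the polygon inscribed in the curve `γ` with parameters `u 0, …, u m`:
the sum of the euclidean lengths of its edges. -/
def polyLen {E : Type*} [NormedAddCommGroup E] (γ : ℝ → E) (m : ℕ) (u : ℕ → ℝ) : ℝ :=
  ∑ i ∈ Finset.range m, ‖γ (u (i + 1)) - γ (u i)‖

/-- The (Jordan) length of the arc `γ : [a,b] → E`: the supremum of the lengths of all
inscribed polygons, valued in `[0,∞]`. -/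
def arcLen {E : Type*} [NormedAddCommGroup E] (γ : ℝ → E) (a b : ℝ) : ℝ≥0∞ :=
  ⨆ (m : ℕ) (u : ℕ → ℝ) (_ : InscribedIn a b m u), ENNReal.ofReal (polyLen γ m u)

/-- The list of vertices of the polygon inscribed in `γ` with parameters `u 0, …, u m`. -/
def vertexList {E : Type*} (γ : ℝ → E) (m : ℕ) (u : ℕ → ℝ) : List E :=
  (List.range (m + 1)).map fun i => γ (u i)

/-- Collapse consecutive equal entries of a list to single entries. -/
def collapse {E : Type*} (l : List E) : List E :=
  @List.destutter E (· ≠ ·) (Classical.decRel _) l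

/-- The sum of the turning angles of a polygon given by its list of vertices: at each
interior vertex, the angle in `[0,π]` between the incoming and outgoing edge vectors. -/
def turnSum {E : Type*} [NormedAddCommGroup E] [InnerProductSpace ℝ E] : List E → ℝ
  | a :: b :: c :: l => InnerProductGeometry.angle (b - a) (c - b) + turnSum (b :: c :: l)
  | _ => 0

/-- The sum, at each interior vertex, of the euclidean distance `‖u₊ - u₋‖` between the
unit tangent vectors of the incoming and outgoing edges (so a corner of turning angle θ
contributes `2 sin(θ/2)`). -/
def starSum {E : Type*} [NormedAddCommGroup E] [InnerProductSpace ℝ E] : List E → ℝ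
  | a :: b :: c :: l =>
      ‖(‖c - b‖⁻¹ • (c - b)) - (‖b - a‖⁻¹ • (b - a))‖ + starSum (b :: c :: l)
  | _ => 0

/-- The total curvature of the polygon inscribed in `γ` with parameters `u 0, …, u m`:
after collapsing consecutive equal vertices, the sum of its turning angles. -/
def polyTC {E : Type*} [NormedAddCommGroup E] [InnerProductSpace ℝ E]
    (γ : ℝ → E) (m : ℕ) (u : ℕ → ℝ) : ℝ :=
  turnSum (collapse (vertexList γ m u))

/-- The total curvature of the arc `γ : [a,b] → E`: the supremum over all inscribed
polygons of their total curvature, valued in `[0,∞]`. -/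
def arcTC {E : Type*} [NormedAddCommGroup E] [InnerProductSpace ℝ E]
    (γ : ℝ → E) (a b : ℝ) : ℝ≥0∞ :=
  ⨆ (m : ℕ) (u : ℕ → ℝ) (_ : InscribedIn a b m u), ENNReal.ofReal (polyTC γ m u)

/-- The euclidean total curvature `TC*` of the polygon inscribed in `γ` with parameters
`u 0, …, u m`. -/
def polyTCStar {E : Type*} [NormedAddCommGroup E] [InnerProductSpace ℝ E]
    (γ : ℝ → E) (m : ℕ) (u : ℕ → ℝ) : ℝ :=
  starSum (collapse (vertexList γ m u))

/-- The euclidean total curvature `TC*` of the arc `γ : [a,b] → E`. -/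
def arcTCStar {E : Type*} [NormedAddCommGroup E] [InnerProductSpace ℝ E]
    (γ : ℝ → E) (a b : ℝ) : ℝ≥0∞ :=
  ⨆ (m : ℕ) (u : ℕ → ℝ) (_ : InscribedIn a b m u), ENNReal.ofReal (polyTCStar γ m u)

/-- Cyclically ordered parameters `u 0 < ⋯ < u m` in `[0,1)` of a polygon inscribed in a
loop `γ : ℝ/ℤ → E`. -/
def LoopInscribed (m : ℕ) (u : ℕ → ℝ) : Prop :=
  (∀ i < m, u i < u (i + 1)) ∧ ∀ i ≤ m, u i ∈ Set.Ico (0 : ℝ) 1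

/-- The list of vertices of the polygon inscribed in the loop `γ` with parameters
`u 0, …, u m`. -/
def loopVertexList {E : Type*} (γ : AddCircle (1 : ℝ) → E) (m : ℕ) (u : ℕ → ℝ) : List E :=
  (List.range (m + 1)).map fun i => γ (u i : ℝ)

/-- The sum of the lengths of the successive edges of a list of points. -/
def lenList {E : Type*} [NormedAddCommGroup E] : List E → ℝ
  | a :: b :: l => ‖b - a‖ + lenList (b :: l)
  | _ => 0

/-- The length of the closed polygon inscribed in the loop `γ` with parameters
`u 0, …, u m`: the sum of the edge lengths, indices taken cyclically. -/
def loopPolyLen {E : Type*} [NormedAddCommGroup E]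
    (γ : AddCircle (1 : ℝ) → E) (m : ℕ) (u : ℕ → ℝ) : ℝ :=
  lenList (loopVertexList γ m u ++ (loopVertexList γ m u).take 1)

/-- The length of a loop `γ : ℝ/ℤ → E`: the supremum of the lengths of inscribed closed
polygons, valued in `[0,∞]`. -/
def loopLen {E : Type*} [NormedAddCommGroup E] (γ : AddCircle (1 : ℝ) → E) : ℝ≥0∞ :=
  ⨆ (m : ℕ) (u : ℕ → ℝ) (_ : LoopInscribed m u), ENNReal.ofReal (loopPolyLen γ m u)

open Classical in
/-- Collapse consecutive equal vertices of a *cyclic* list of vertices: collapse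
consecutive duplicates, also across the wrap-around. -/
def cyclicCollapse {E : Type*} (l : List E) : List E :=
  if 2 ≤ (collapse l).length ∧ (collapse l).getLast? = (collapse l).head? then
    (collapse l).dropLast
  else collapse l

/-- The total curvature of the closed polygon inscribed in the loop `γ` with parameters
`u 0, …, u m`: after cyclically collapsing consecutive equal vertices, the sum of the
turning angles at all of its vertices (every vertex of a closed polygon is interior). -/
def loopPolyTC {E : Type*} [NormedAddCommGroup E] [InnerProductSpace ℝ E]
    (γ : AddCircle (1 : ℝ) → E) (m : ℕ) (u : ℕ → ℝ) : ℝ :=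
  turnSum (cyclicCollapse (loopVertexList γ m u) ++
    (cyclicCollapse (loopVertexList γ m u)).take 2)

/-- The total curvature of a loop `γ : ℝ/ℤ → E`: the supremum over all inscribed closed
polygons of their total curvature, valued in `[0,∞]`. -/
def loopTC {E : Type*} [NormedAddCommGroup E] [InnerProductSpace ℝ E]
    (γ : AddCircle (1 : ℝ) → E) : ℝ≥0∞ :=
  ⨆ (m : ℕ) (u : ℕ → ℝ) (_ : LoopInscribed m u), ENNReal.ofReal (loopPolyTC γ m u)

/-- The euclidean total curvature `TC*` of the closed inscribed polygon. -/
def loopPolyTCStar {E : Type*} [NormedAddCommGroup E] [InnerProductSpace ℝ E]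
    (γ : AddCircle (1 : ℝ) → E) (m : ℕ) (u : ℕ → ℝ) : ℝ :=
  starSum (cyclicCollapse (loopVertexList γ m u) ++
    (cyclicCollapse (loopVertexList γ m u)).take 2)

/-- The euclidean total curvature `TC*` of a loop `γ : ℝ/ℤ → E`. -/
def loopTCStar {E : Type*} [NormedAddCommGroup E] [InnerProductSpace ℝ E]
    (γ : AddCircle (1 : ℝ) → E) : ℝ≥0∞ :=
  ⨆ (m : ℕ) (u : ℕ → ℝ) (_ : LoopInscribed m u), ENNReal.ofReal (loopPolyTCStar γ m u)

end

theorem arcLen_eq_eVariationOn' {E : Type*} [NormedAddCommGroup E] (γ : ℝ → E) (a b : ℝ) :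
    arcLen γ a b = eVariationOn γ (Set.Icc a b) := by
  have key : ∀ (m : ℕ) (u : ℕ → ℝ), ENNReal.ofReal (polyLen γ m u) =
      ∑ i ∈ Finset.range m, edist (γ (u (i + 1))) (γ (u i)) := by
    intro m u
    unfold polyLen
    rw [ENNReal.ofReal_sum_of_nonneg (fun i _ => norm_nonneg _)]
    refine Finset.sum_congr rfl fun i _ => ?_
    rw [edist_dist, dist_eq_norm]
  apply le_antisymm
  · refine iSup_le fun m => iSup_le fun u => iSup_le fun hu => ?_
    rw [key]
    refine eVariationOn.sum_le_of_monotoneOn_Iic ?_ hu.2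
    intro i hi j hj hij
    induction j, hij using Nat.le_induction with
    | base => exact le_rfl
    | succ k hk ih =>
      have hk' : k + 1 ≤ m := hj
      exact (ih (show k ≤ m by omega)).trans (hu.1 k (by omega)).le
  · rw [eVariationOn.eVariationOn_eq_strictMonoOn]
    refine iSup_le fun ⟨m, u, hu, hmem⟩ => ?_
    have hI : InscribedIn a b m u :=
      ⟨fun i hi => hu (show i ≤ m by omega) (show i + 1 ≤ m by omega) (Nat.lt_succ_self i),
        fun i hi => hmem i hi⟩
    refine le_trans ?_ (le_iSup_of_le m (le_iSup_of_le u (le_iSup_of_le hI le_rfl)))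
    rw [key]

theorem general_refine {E : Type*} [PseudoEMetricSpace E] (f : ℝ → E) (c : ℝ≥0∞)
    (A B : ℝ → ℝ → ℝ≥0∞)
    (hA : ∀ s r t, s ≤ r → r ≤ t → A s t ≤ A s r + A r t)
    (hB : ∀ s r t, s ≤ r → r ≤ t → B s r + B r t ≤ B s t)
    (h : ∀ s t, s ≤ t → c * edist (f t) (f s) + A s t ≤ B s t)
    (s t : ℝ) (hst : s ≤ t) :
    c * eVariationOn f (Set.Icc s t) + A s t ≤ B s t := by
  have h' : ∀ s t, s ≤ t → A s t ≤ B s t := fun s t hst => le_add_self.trans (h s t hst)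
  unfold eVariationOn
  have : Nonempty (ℕ × { u : ℕ → ℝ // Monotone u ∧ ∀ i, u i ∈ Set.Icc s t }) :=
    ⟨0, fun _ => s, monotone_const, fun _ => ⟨le_rfl, hst⟩⟩
  rw [ENNReal.mul_iSup, ENNReal.iSup_add]
  refine iSup_le fun ⟨n, u, hu, hmem⟩ => ?_
  have ind : ∀ n : ℕ, c * ∑ i ∈ Finset.range n, edist (f (u (i + 1))) (f (u i)) + A s (u n)
      ≤ B s (u n) := by
    intro n
    induction n with
    | zero => simpa using h' s (u 0) (hmem 0).1
    | succ k ih =>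
      have hk : u k ≤ u (k + 1) := hu (Nat.le_succ k)
      rw [Finset.sum_range_succ, mul_add]
      calc _ ≤ c * ∑ i ∈ Finset.range k, edist (f (u (i + 1))) (f (u i))
              + c * edist (f (u (k + 1))) (f (u k)) + (A s (u k) + A (u k) (u (k + 1))) := by
            gcongr; exact hA _ _ _ (hmem k).1 hk
        _ = (c * ∑ i ∈ Finset.range k, edist (f (u (i + 1))) (f (u i)) + A s (u k))
              + (c * edist (f (u (k + 1))) (f (u k)) + A (u k) (u (k + 1))) := by ring
        _ ≤ B s (u k) + B (u k) (u (k + 1)) := add_le_add ih (h _ _ hk)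
        _ ≤ _ := hB _ _ _ (hmem k).1 hk
  calc _ ≤ c * ∑ i ∈ Finset.range n, edist (f (u (i + 1))) (f (u i))
        + (A s (u n) + A (u n) t) := by
          gcongr; exact hA _ _ _ (hmem n).1 (hmem n).2
    _ = (c * ∑ i ∈ Finset.range n, edist (f (u (i + 1))) (f (u i)) + A s (u n))
        + A (u n) t := by ring
    _ ≤ B s (u n) + B (u n) t := add_le_add (ind n) (h' _ _ (hmem n).2)
    _ ≤ _ := hB _ _ _ (hmem n).1 (hmem n).2

theorem eVar_add {E : Type*} [PseudoEMetricSpace E] (f : ℝ → E) (s r t : ℝ)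
    (h1 : s ≤ r) (h2 : r ≤ t) :
    eVariationOn f (Set.Icc s r) + eVariationOn f (Set.Icc r t)
      = eVariationOn f (Set.Icc s t) := by
  simpa using eVariationOn.Icc_add_Icc f (s := Set.univ) h1 h2 (Set.mem_univ r)

theorem eVar_combo {E E₁ E₂ : Type*} [PseudoEMetricSpace E] [PseudoEMetricSpace E₁]
    [PseudoEMetricSpace E₂] (f : ℝ → E) (f₁ : ℝ → E₁) (f₂ : ℝ → E₂) (c d K : ℝ≥0∞)
    (h : ∀ s t, c * edist (f₁ t) (f₁ s) + d * edist (f₂ t) (f₂ s) ≤ K * edist (f t) (f s))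
    (s t : ℝ) (hst : s ≤ t) :
    c * eVariationOn f₁ (Set.Icc s t) + d * eVariationOn f₂ (Set.Icc s t)
      ≤ K * eVariationOn f (Set.Icc s t) := by
  have hB : ∀ s r t : ℝ, s ≤ r → r ≤ t →
      K * eVariationOn f (Set.Icc s r) + K * eVariationOn f (Set.Icc r t)
        ≤ K * eVariationOn f (Set.Icc s t) := by
    intro s r t h1 h2
    rw [← mul_add, eVar_add f s r t h1 h2]
  refine general_refine f₁ c (fun s t => d * eVariationOn f₂ (Set.Icc s t))
    (fun s t => K * eVariationOn f (Set.Icc s t)) ?_ hB ?_ s t hst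
  · intro s r t h1 h2
    rw [← mul_add, eVar_add f₂ s r t h1 h2]
  · intro s t hst
    rw [add_comm]
    refine general_refine f₂ d (fun s t => c * edist (f₁ t) (f₁ s))
      (fun s t => K * eVariationOn f (Set.Icc s t)) ?_ hB ?_ s t hst
    · intro s r t _ _
      rw [← mul_add, add_comm]
      gcongr
      exact edist_triangle _ _ _
    · intro s t hst
      rw [add_comm]
      refine (h s t).trans ?_
      gcongr
      exact eVariationOn.edist_le f (Set.right_mem_Icc.2 hst) (Set.left_mem_Icc.2 hst)

/-- if a continuous rectifiable curve `γ : [0,1] → ℝᵐ × ℝⁿ` has length `L`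
and its coordinate projections to `ℝᵐ` and `ℝⁿ` have lengths `a` and `b`, then
`a² + b² ≤ L²`. -/
theorem projection_lengths_sq_le (m n : ℕ) (γ : ℝ → EuclideanSpace ℝ (Fin (m + n)))
    (hγ : ContinuousOn γ (Set.Icc 0 1)) (hrect : arcLen γ 0 1 ≠ ⊤) :
    (arcLen (fun t => (EuclideanSpace.equiv (Fin m) ℝ).symm fun i =>
        γ t (Fin.castAdd n i)) 0 1).toReal ^ 2 +
      (arcLen (fun t => (EuclideanSpace.equiv (Fin n) ℝ).symm fun i =>
        γ t (Fin.natAdd m i)) 0 1).toReal ^ 2 ≤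
      (arcLen γ 0 1).toReal ^ 2 := by
  rw [arcLen_eq_eVariationOn'] at hrect
  simp only [arcLen_eq_eVariationOn']
  set f₁ : ℝ → EuclideanSpace ℝ (Fin m) := fun t => (EuclideanSpace.equiv (Fin m) ℝ).symm fun i =>
        γ t (Fin.castAdd n i) with hf₁
  set f₂ : ℝ → EuclideanSpace ℝ (Fin n) := fun t => (EuclideanSpace.equiv (Fin n) ℝ).symm fun i =>
        γ t (Fin.natAdd m i) with hf₂
  have hnorm : ∀ s t, ‖f₁ t - f₁ s‖ ^ 2 + ‖f₂ t - f₂ s‖ ^ 2 = ‖γ t - γ s‖ ^ 2 := by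
    intro s t
    simp only [EuclideanSpace.real_norm_sq_eq, Fin.sum_univ_add]
    simp [hf₁, hf₂]
  set a := (eVariationOn f₁ (Set.Icc 0 1)).toReal with ha
  set b := (eVariationOn f₂ (Set.Icc 0 1)).toReal with hb
  have ha0 : 0 ≤ a := ENNReal.toReal_nonneg
  have hb0 : 0 ≤ b := ENNReal.toReal_nonneg
  have hmain := eVar_combo γ f₁ f₂ (ENNReal.ofReal a) (ENNReal.ofReal b)
    (ENNReal.ofReal (Real.sqrt (a ^ 2 + b ^ 2))) (by
      intro s t
      simp only [edist_dist, dist_eq_norm]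
      rw [← ENNReal.ofReal_mul ha0, ← ENNReal.ofReal_mul hb0,
        ← ENNReal.ofReal_mul (Real.sqrt_nonneg _),
        ← ENNReal.ofReal_add (by positivity) (by positivity)]
      apply ENNReal.ofReal_le_ofReal
      refine (sq_le_sq₀ (by positivity) (by positivity)).1 ?_
      rw [mul_pow, Real.sq_sqrt (by positivity), ← hnorm s t]
      nlinarith [sq_nonneg (a * ‖f₂ t - f₂ s‖ - b * ‖f₁ t - f₁ s‖)]) 0 1 zero_le_one
  have hx : ∀ x : ℝ≥0∞, (ENNReal.ofReal x.toReal * x).toReal = x.toReal ^ 2 := by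
    intro x
    rw [ENNReal.toReal_mul, ENNReal.toReal_ofReal ENNReal.toReal_nonneg, sq]
  have hfin : ∀ x : ℝ≥0∞, ENNReal.ofReal x.toReal * x ≠ ⊤ := by
    intro x
    by_cases h : x = ⊤
    · simp [h]
    · exact ENNReal.mul_ne_top ENNReal.ofReal_ne_top h
  have h2 := ENNReal.toReal_mono (ENNReal.mul_ne_top ENNReal.ofReal_ne_top hrect) hmain
  rw [ENNReal.toReal_add (hfin _) (hfin _), hx, hx, ENNReal.toReal_mul,
    ENNReal.toReal_ofReal (Real.sqrt_nonneg _), ← ha, ← hb] at h2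
  set L := (eVariationOn γ (Set.Icc 0 1)).toReal
  have hL : 0 ≤ L := ENNReal.toReal_nonneg
  have hS := Real.sq_sqrt (show 0 ≤ a ^ 2 + b ^ 2 by positivity)
  nlinarith [sq_nonneg (L - Real.sqrt (a ^ 2 + b ^ 2))]
end

section
/- Let γ : ℝ/ℤ → ℝ^d be a nonconstant continuous closed curve of finite length L, and suppose p₁ = γ(s₁) and p₂ = γ(s₂) realize the diameter of γ, i.e. ‖p₁ − p₂‖ = sup_{s,t} ‖γ(s) − γ(t)‖. Let Π : ℝ^d → ℝ^d denote the orthogonal projection onto the hyperplane through the origin orthogonal to p₁ − p₂. Then the projected curve Π ∘ γ has diameter at most L/(2√2): sup_{s,t} ‖Π(γ(s)) − Π(γ(t))‖ ≤ L/(2√2). This estimate is sharp for a square. -/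
open Set Filter MeasureTheory
open scoped ENNReal NNReal RealInnerProductSpace

open scoped RealInnerProductSpace

/-- Orthogonal projection of `x` onto the hyperplane through the origin orthogonal to
the (nonzero) vector `w`: with `u := w/‖w‖`, it is `x - ⟨x,u⟩·u`. -/
noncomputable def projHyperplane {E : Type*} [NormedAddCommGroup E]
    [InnerProductSpace ℝ E] (w x : E) : E :=
  x - ⟪x, ‖w‖⁻¹ • w⟫ • (‖w‖⁻¹ • w)

section helpers

variable {E : Type*} [NormedAddCommGroup E]

lemma loop_bound (γ : AddCircle (1 : ℝ) → E) (hfin : loopLen γ ≠ ⊤) (m : ℕ) (u : ℕ → ℝ)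
    (hu : LoopInscribed m u) : loopPolyLen γ m u ≤ (loopLen γ).toReal := by
  have h : ENNReal.ofReal (loopPolyLen γ m u) ≤ loopLen γ := by
    unfold loopLen
    exact le_iSup_of_le m (le_iSup_of_le u (le_iSup_of_le hu le_rfl))
  exact (ENNReal.ofReal_le_iff_le_toReal hfin).1 h

lemma bound2 (γ : AddCircle (1 : ℝ) → E) (hfin : loopLen γ ≠ ⊤) (a b : ℝ)
    (ha : 0 ≤ a) (hab : a ≤ b) (hb : b < 1) :
    ‖γ b - γ a‖ + ‖γ a - γ b‖ ≤ (loopLen γ).toReal := by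
  rcases hab.eq_or_lt with rfl | hab
  · simp
  have := loop_bound γ hfin 1 (fun i => if i = 0 then a else b) (by
    constructor
    · intro i hi
      interval_cases i <;> simp [hab]
    · intro i hi
      interval_cases i <;> simp <;> constructor <;> linarith)
  simpa [loopPolyLen, loopVertexList, lenList, List.range_succ] using this

lemma bound3 (γ : AddCircle (1 : ℝ) → E) (hfin : loopLen γ ≠ ⊤) (a b c : ℝ)
    (ha : 0 ≤ a) (hab : a ≤ b) (hbc : b ≤ c) (hc : c < 1) :
    ‖γ b - γ a‖ + (‖γ c - γ b‖ + ‖γ a - γ c‖) ≤ (loopLen γ).toReal := by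
  rcases hab.eq_or_lt with rfl | hab
  · simpa using bound2 γ hfin a c ha hbc hc
  rcases hbc.eq_or_lt with rfl | hbc
  · simpa using bound2 γ hfin a b ha hab.le hc
  have := loop_bound γ hfin 2 (fun i => if i = 0 then a else if i = 1 then b else c) (by
    constructor
    · intro i hi
      interval_cases i <;> simp [hab, hbc]
    · intro i hi
      interval_cases i <;> simp <;> constructor <;> linarith)
  simpa [loopPolyLen, loopVertexList, lenList, List.range_succ] using this

lemma bound4 (γ : AddCircle (1 : ℝ) → E) (hfin : loopLen γ ≠ ⊤) (a b c e : ℝ)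
    (ha : 0 ≤ a) (hab : a ≤ b) (hbc : b ≤ c) (hce : c ≤ e) (he : e < 1) :
    ‖γ b - γ a‖ + (‖γ c - γ b‖ + (‖γ e - γ c‖ + ‖γ a - γ e‖)) ≤ (loopLen γ).toReal := by
  rcases hab.eq_or_lt with rfl | hab
  · simpa using bound3 γ hfin a c e ha hbc hce he
  rcases hbc.eq_or_lt with rfl | hbc
  · simpa using bound3 γ hfin a b e ha hab.le hce he
  rcases hce.eq_or_lt with rfl | hce
  · simpa using bound3 γ hfin a b c ha hab.le hbc.le he
  have := loop_bound γ hfin 3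
    (fun i => if i = 0 then a else if i = 1 then b else if i = 2 then c else e) (by
    constructor
    · intro i hi
      interval_cases i <;> simp [hab, hbc, hce]
    · intro i hi
      interval_cases i <;> simp <;> constructor <;> linarith)
  simpa [loopPolyLen, loopVertexList, lenList, List.range_succ] using this

/-- Perimeter bound for the three possible cyclic orders of four points. -/
lemma bound_cases (γ : AddCircle (1 : ℝ) → E) (hfin : loopLen γ ≠ ⊤)
    (p q r s : AddCircle (1 : ℝ)) :
    ‖γ p - γ r‖ + ‖γ r - γ q‖ + ‖γ q - γ s‖ + ‖γ s - γ p‖ ≤ (loopLen γ).toReal ∨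
    ‖γ p - γ q‖ + ‖γ q - γ r‖ + ‖γ r - γ s‖ + ‖γ s - γ p‖ ≤ (loopLen γ).toReal ∨
    ‖γ p - γ q‖ + ‖γ q - γ s‖ + ‖γ s - γ r‖ + ‖γ r - γ p‖ ≤ (loopLen γ).toReal := by
  have rep : ∀ x : AddCircle (1 : ℝ), ∃ a : ℝ, 0 ≤ a ∧ a < 1 ∧ (a : AddCircle (1 : ℝ)) = x := by
    intro x
    have : Fact ((0 : ℝ) < 1) := ⟨one_pos⟩
    obtain ⟨a, ha, h⟩ : x ∈ (fun y : ℝ => (y : AddCircle (1 : ℝ))) '' Set.Ico 0 (0 + 1) := by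
      rw [AddCircle.coe_image_Ico_eq]
      trivial
    exact ⟨a, ha.1, by simpa using ha.2, h⟩
  obtain ⟨a, a0, a1, rfl⟩ := rep p
  obtain ⟨b, b0, b1, rfl⟩ := rep q
  obtain ⟨c, c0, c1, rfl⟩ := rep r
  obtain ⟨e, e0, e1, rfl⟩ := rep s
  have n1 := norm_sub_rev (γ a) (γ b)
  have n2 := norm_sub_rev (γ a) (γ c)
  have n3 := norm_sub_rev (γ a) (γ e)
  have n4 := norm_sub_rev (γ b) (γ c)
  have n5 := norm_sub_rev (γ b) (γ e)
  have n6 := norm_sub_rev (γ c) (γ e)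
  have key : ∀ w x y z : ℝ, 0 ≤ w → z < 1 → w ≤ x → x ≤ y → y ≤ z →
      ‖γ x - γ w‖ + (‖γ y - γ x‖ + (‖γ z - γ y‖ + ‖γ w - γ z‖)) ≤ (loopLen γ).toReal :=
    fun w x y z h0 h1 h2 h3 h4 => bound4 γ hfin w x y z h0 h2 h3 h4 h1
  rcases le_total a b with h1 | h1 <;> rcases le_total a c with h2 | h2 <;>
    rcases le_total a e with h3 | h3 <;> rcases le_total b c with h4 | h4 <;>
    rcases le_total b e with h5 | h5 <;> rcases le_total c e with h6 | h6 <;>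
    first
    | exact Or.inr <| Or.inl (by linarith [key a b c e a0 e1 ‹_› ‹_› ‹_›])
    | exact Or.inr <| Or.inr (by linarith [key a b e c a0 c1 ‹_› ‹_› ‹_›])
    | exact Or.inl (by linarith [key a c b e a0 e1 ‹_› ‹_› ‹_›])
    | exact Or.inr <| Or.inr (by linarith [key a c e b a0 b1 ‹_› ‹_› ‹_›])
    | exact Or.inl (by linarith [key a e b c a0 c1 ‹_› ‹_› ‹_›])
    | exact Or.inr <| Or.inl (by linarith [key a e c b a0 b1 ‹_› ‹_› ‹_›])
    | exact Or.inr <| Or.inr (by linarith [key b a c e b0 e1 ‹_› ‹_› ‹_›])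
    | exact Or.inr <| Or.inl (by linarith [key b a e c b0 c1 ‹_› ‹_› ‹_›])
    | exact Or.inl (by linarith [key b c a e b0 e1 ‹_› ‹_› ‹_›])
    | exact Or.inr <| Or.inl (by linarith [key b c e a b0 a1 ‹_› ‹_› ‹_›])
    | exact Or.inl (by linarith [key b e a c b0 c1 ‹_› ‹_› ‹_›])
    | exact Or.inr <| Or.inr (by linarith [key b e c a b0 a1 ‹_› ‹_› ‹_›])
    | exact Or.inr <| Or.inr (by linarith [key c a b e c0 e1 ‹_› ‹_› ‹_›])
    | exact Or.inl (by linarith [key c a e b c0 b1 ‹_› ‹_› ‹_›])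
    | exact Or.inr <| Or.inl (by linarith [key c b a e c0 e1 ‹_› ‹_› ‹_›])
    | exact Or.inl (by linarith [key c b e a c0 a1 ‹_› ‹_› ‹_›])
    | exact Or.inr <| Or.inl (by linarith [key c e a b c0 b1 ‹_› ‹_› ‹_›])
    | exact Or.inr <| Or.inr (by linarith [key c e b a c0 a1 ‹_› ‹_› ‹_›])
    | exact Or.inr <| Or.inl (by linarith [key e a b c e0 c1 ‹_› ‹_› ‹_›])
    | exact Or.inl (by linarith [key e a c b e0 b1 ‹_› ‹_› ‹_›])
    | exact Or.inr <| Or.inr (by linarith [key e b a c e0 c1 ‹_› ‹_› ‹_›])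
    | exact Or.inl (by linarith [key e b c a e0 a1 ‹_› ‹_› ‹_›])
    | exact Or.inr <| Or.inr (by linarith [key e c a b e0 b1 ‹_› ‹_› ‹_›])
    | exact Or.inr <| Or.inl (by linarith [key e c b a e0 a1 ‹_› ‹_› ‹_›])

end helpers

section geom

variable {E : Type*} [NormedAddCommGroup E] [InnerProductSpace ℝ E]

lemma proj_sub (w x y : E) :
    projHyperplane w x - projHyperplane w y = projHyperplane w (x - y) := by
  unfold projHyperplane
  rw [inner_sub_left, sub_smul]
  abel

lemma proj_sq (w : E) (hw : w ≠ 0) (v : E) :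
    ‖projHyperplane w v‖ ^ 2 + ⟪v, ‖w‖⁻¹ • w⟫ ^ 2 = ‖v‖ ^ 2 := by
  unfold projHyperplane
  have hu : ‖‖w‖⁻¹ • w‖ = 1 := by
    rw [norm_smul, norm_inv, norm_norm, inv_mul_cancel₀ (norm_ne_zero_iff.2 hw)]
  generalize ‖w‖⁻¹ • w = u at hu ⊢
  rw [norm_sub_sq_real, norm_smul, inner_smul_right, hu, Real.norm_eq_abs, mul_one, sq_abs]
  ring

lemma proj_edge (w : E) (hw : w ≠ 0) (x y : E) :
    |⟪x, ‖w‖⁻¹ • w⟫ - ⟪y, ‖w‖⁻¹ • w⟫| + ‖projHyperplane w x - projHyperplane w y‖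
      ≤ Real.sqrt 2 * ‖x - y‖ := by
  rw [proj_sub, ← inner_sub_left]
  have h := proj_sq w hw (x - y)
  rw [← sq_abs (⟪x - y, ‖w‖⁻¹ • w⟫)] at h
  have h2 : Real.sqrt 2 ^ 2 = 2 := Real.sq_sqrt (by norm_num)
  refine (pow_le_pow_iff_left₀ (by positivity) (by positivity) two_ne_zero).1 ?_
  rw [mul_pow, h2, ← h]
  nlinarith [sq_nonneg (|⟪x - y, ‖w‖⁻¹ • w⟫| - ‖projHyperplane w (x - y)‖)]

end geom

/-- Wienholtz: if `p₁ = γ s₁`, `p₂ = γ s₂` realize the diameter of a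
nonconstant closed curve `γ` of finite length `L` in `ℝᵈ`, then the orthogonal
projection of `γ` to the hyperplane orthogonal to `p₁ - p₂` has diameter at most
`L/(2√2)` (an estimate that is sharp for a square). -/
theorem projection_diameter_le (d : ℕ) (γ : AddCircle (1 : ℝ) → EuclideanSpace ℝ (Fin d))
    (hγ : Continuous γ) (hnc : ∃ a b, γ a ≠ γ b) (hfin : loopLen γ ≠ ⊤)
    (s₁ s₂ : AddCircle (1 : ℝ))
    (hdiam : ∀ s t : AddCircle (1 : ℝ), ‖γ s - γ t‖ ≤ ‖γ s₁ - γ s₂‖) :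
    ∀ s t : AddCircle (1 : ℝ),
      ‖projHyperplane (γ s₁ - γ s₂) (γ s) - projHyperplane (γ s₁ - γ s₂) (γ t)‖ ≤
        (loopLen γ).toReal / (2 * Real.sqrt 2) := by
  intro s t
  set w := γ s₁ - γ s₂ with hwdef
  have hw : w ≠ 0 := by
    intro h
    obtain ⟨a, b, hab⟩ := hnc
    have := hdiam a b
    rw [h, norm_zero] at this
    exact hab (sub_eq_zero.1 (norm_le_zero_iff.1 this))
  have hw0 : ‖w‖ ≠ 0 := norm_ne_zero_iff.2 hw
  have hD : ⟪γ s₁, ‖w‖⁻¹ • w⟫ - ⟪γ s₂, ‖w‖⁻¹ • w⟫ = ‖w‖ := by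
    rw [← inner_sub_left, ← hwdef, inner_smul_right, real_inner_self_eq_norm_sq]
    field_simp
  have hP : projHyperplane w (γ s₁) = projHyperplane w (γ s₂) := by
    rw [← sub_eq_zero, proj_sub, ← hwdef, ← norm_eq_zero]
    have h := proj_sq w hw w
    have h' := hD
    rw [← inner_sub_left, ← hwdef] at h'
    rw [h'] at h
    nlinarith
  have hρ : ‖projHyperplane w (γ s) - projHyperplane w (γ t)‖ ≤ ‖w‖ := by
    refine le_trans ?_ (hdiam s t)
    rw [proj_sub]
    refine (pow_le_pow_iff_left₀ (by positivity) (by positivity) two_ne_zero).1 ?_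
    have := proj_sq w hw (γ s - γ t)
    nlinarith [sq_nonneg ⟪γ s - γ t, ‖w‖⁻¹ • w⟫]
  have h2 : Real.sqrt 2 ^ 2 = 2 := Real.sq_sqrt (by norm_num)
  have h2p : 0 < Real.sqrt 2 := Real.sqrt_pos.2 (by norm_num)
  suffices H : 4 * ‖projHyperplane w (γ s) - projHyperplane w (γ t)‖
      ≤ Real.sqrt 2 * (loopLen γ).toReal by
    rw [le_div_iff₀ (by positivity)]
    have H' := mul_le_mul_of_nonneg_left H h2p.le
    rw [← mul_assoc (Real.sqrt 2) (Real.sqrt 2), ← sq, h2] at H'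
    linarith
  have tri : ‖projHyperplane w (γ s) - projHyperplane w (γ t)‖ ≤
      ‖projHyperplane w (γ s) - projHyperplane w (γ s₂)‖ +
      ‖projHyperplane w (γ s₂) - projHyperplane w (γ t)‖ := norm_sub_le_norm_sub_add_norm_sub _ _ _
  have E := fun x y => proj_edge w hw (γ x) (γ y)
  have e0 := E s₁ s₂
  have e1 := E s₁ s
  have e2 := E s s₂
  have e3 := E s₂ t
  have e4 := E t s₁
  have e5 := E s₂ s
  have e6 := E s t
  have e7 := E t s
  have e8 := E s s₁
  rw [hP] at e0 e1 e4 e8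
  rw [sub_self, norm_zero] at e0
  rw [norm_sub_rev (projHyperplane w (γ s₂)) (projHyperplane w (γ s))] at e1 e5
  rw [norm_sub_rev (projHyperplane w (γ t)) (projHyperplane w (γ s₂))] at e4
  rw [norm_sub_rev (projHyperplane w (γ t)) (projHyperplane w (γ s))] at e7
  set A := ⟪γ s₁, ‖w‖⁻¹ • w⟫
  set B := ⟪γ s₂, ‖w‖⁻¹ • w⟫
  set S := ⟪γ s, ‖w‖⁻¹ • w⟫
  set T := ⟪γ t, ‖w‖⁻¹ • w⟫
  rcases bound_cases γ hfin s₁ s₂ s t with h | h | h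
  · have h := mul_le_mul_of_nonneg_left h h2p.le
    linarith [le_abs_self (A - S), le_abs_self (S - B), neg_le_abs (B - T), neg_le_abs (T - A)]
  · have h := mul_le_mul_of_nonneg_left h h2p.le
    linarith [le_abs_self (A - B), neg_le_abs (B - S), neg_le_abs (S - T), neg_le_abs (T - A)]
  · have h := mul_le_mul_of_nonneg_left h h2p.le
    linarith [le_abs_self (A - B), neg_le_abs (B - T), neg_le_abs (T - S), neg_le_abs (S - A)]
end
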